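/- arXiv:1012.3564 — 4 statements merged into one kernel-verified Lean document; each statement's English description precedes it below -/
import Mathlib

section
/- Let ψ = e_1⊗e_1⊗e_1 + e_1⊗e_2⊗e_2 + e_2⊗e_1⊗e_3 + e_2⊗e_2⊗e_4 ∈ ℂ^2 ⊗ ℂ^2 ⊗ ℂ^4 and let GHZ_{3,3} = Σ_{i=1}^3 e_i⊗e_i⊗e_i ∈ ℂ^3 ⊗ ℂ^3 ⊗ ℂ^3. Then ψ and GHZ_{3,3} are SLOCC incomparable: there exist no linear maps A : ℂ^3 → ℂ^2, B : ℂ^3 → ℂ^2, C : ℂ^3 → ℂ^4 with (A ⊗ B ⊗ C)(GHZ_{3,3}) = ψ, and there exist no linear maps A' : ℂ^2 → ℂ^3, B' : ℂ^2 → ℂ^3, C' : ℂ^4 → ℂ^3 with (A' ⊗ B' ⊗ C')(ψ) = GHZ_{3,3}. -/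
/-!
Both transformations fail because a linear map into a space of larger dimension misses a direction.
If `T` is the local map into a larger space (`C : ℂ³ → ℂ⁴`, respectively `A' : ℂ² → ℂ³`), there is
a nonzero functional `h` vanishing on the range of `T` (`exists_dual_comp_eq_zero`). Contracting
the transformed state with `h` in that tensor factor gives zero, whatever functionals are used in
the other two factors. Both `psiExample` (third factor) and `ghz33` (first factor) have full local
rank: contracting with `h` and suitable coordinate functionals recovers every value `h eᵢ`, so
`h = 0`, a contradiction.
-/

open scoped TensorProduct

/-- The state `e₁⊗e₁⊗e₁ + e₁⊗e₂⊗e₂ + e₂⊗e₁⊗e₃ + e₂⊗e₂⊗e₄ ∈ ℂ² ⊗ ℂ² ⊗ ℂ⁴`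
(with zero-based indexing of the standard basis vectors). -/
noncomputable def psiExample : (Fin 2 → ℂ) ⊗[ℂ] ((Fin 2 → ℂ) ⊗[ℂ] (Fin 4 → ℂ)) :=
  (Pi.single 0 1 : Fin 2 → ℂ) ⊗ₜ[ℂ] ((Pi.single 0 1 : Fin 2 → ℂ) ⊗ₜ[ℂ] (Pi.single 0 1 : Fin 4 → ℂ))
  + (Pi.single 0 1 : Fin 2 → ℂ) ⊗ₜ[ℂ] ((Pi.single 1 1 : Fin 2 → ℂ) ⊗ₜ[ℂ] (Pi.single 1 1 : Fin 4 → ℂ))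
  + (Pi.single 1 1 : Fin 2 → ℂ) ⊗ₜ[ℂ] ((Pi.single 0 1 : Fin 2 → ℂ) ⊗ₜ[ℂ] (Pi.single 2 1 : Fin 4 → ℂ))
  + (Pi.single 1 1 : Fin 2 → ℂ) ⊗ₜ[ℂ] ((Pi.single 1 1 : Fin 2 → ℂ) ⊗ₜ[ℂ] (Pi.single 3 1 : Fin 4 → ℂ))

/-- The tripartite GHZ state of rank 3, `∑_{i=1}^3 eᵢ⊗eᵢ⊗eᵢ ∈ ℂ³ ⊗ ℂ³ ⊗ ℂ³`. -/
noncomputable def ghz33 : (Fin 3 → ℂ) ⊗[ℂ] ((Fin 3 → ℂ) ⊗[ℂ] (Fin 3 → ℂ)) :=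
  ∑ i : Fin 3, (Pi.single i 1 : Fin 3 → ℂ) ⊗ₜ[ℂ]
    ((Pi.single i 1 : Fin 3 → ℂ) ⊗ₜ[ℂ] (Pi.single i 1 : Fin 3 → ℂ))

/-- The functional `f ⊗ g ⊗ h` on a triple tensor product, with `ℂ ⊗ (ℂ ⊗ ℂ)` identified with `ℂ` by
multiplication. -/
noncomputable def tripleContract {U V W : Type*} [AddCommGroup U] [Module ℂ U] [AddCommGroup V]
    [Module ℂ V] [AddCommGroup W] [Module ℂ W] (f : U →ₗ[ℂ] ℂ) (g : V →ₗ[ℂ] ℂ) (h : W →ₗ[ℂ] ℂ) :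
    U ⊗[ℂ] (V ⊗[ℂ] W) →ₗ[ℂ] ℂ :=
  LinearMap.mul' ℂ ℂ ∘ₗ TensorProduct.map f (LinearMap.mul' ℂ ℂ ∘ₗ TensorProduct.map g h)

section TripleContract

variable {U V W U' V' W' : Type*} [AddCommGroup U] [Module ℂ U] [AddCommGroup V] [Module ℂ V]
  [AddCommGroup W] [Module ℂ W] [AddCommGroup U'] [Module ℂ U'] [AddCommGroup V'] [Module ℂ V']
  [AddCommGroup W'] [Module ℂ W']

theorem tripleContract_tmul (f : U →ₗ[ℂ] ℂ) (g : V →ₗ[ℂ] ℂ) (h : W →ₗ[ℂ] ℂ) (u : U) (v : V)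
    (w : W) : tripleContract f g h (u ⊗ₜ[ℂ] (v ⊗ₜ[ℂ] w)) = f u * (g v * h w) := by
  simp [tripleContract]

theorem tripleContract_map (f : U' →ₗ[ℂ] ℂ) (g : V' →ₗ[ℂ] ℂ) (h : W' →ₗ[ℂ] ℂ) (A : U →ₗ[ℂ] U')
    (B : V →ₗ[ℂ] V') (C : W →ₗ[ℂ] W') (x : U ⊗[ℂ] (V ⊗[ℂ] W)) :
    tripleContract f g h (TensorProduct.map A (TensorProduct.map B C) x) =
      tripleContract (f ∘ₗ A) (g ∘ₗ B) (h ∘ₗ C) x := by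
  simp only [tripleContract, LinearMap.comp_apply, TensorProduct.map_comp,
    ← LinearMap.comp_assoc]

theorem tripleContract_zero_left (g : V →ₗ[ℂ] ℂ) (h : W →ₗ[ℂ] ℂ) :
    tripleContract (0 : U →ₗ[ℂ] ℂ) g h = 0 := by
  simp [tripleContract]

theorem tripleContract_zero_right (f : U →ₗ[ℂ] ℂ) (g : V →ₗ[ℂ] ℂ) :
    tripleContract f g (0 : W →ₗ[ℂ] ℂ) = 0 := by
  simp [tripleContract]

end TripleContract

/-- The range of `T` has dimension at most `m < n`, so it is a proper subspace and some nonzero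
functional vanishes on it. -/
theorem exists_dual_comp_eq_zero {m n : ℕ} (hmn : m < n) (T : (Fin m → ℂ) →ₗ[ℂ] (Fin n → ℂ)) :
    ∃ h : (Fin n → ℂ) →ₗ[ℂ] ℂ, h ≠ 0 ∧ h ∘ₗ T = 0 := by
  have hlt : LinearMap.range T < ⊤ := by
    refine lt_top_iff_ne_top.2 fun htop => ?_
    have h1 := LinearMap.finrank_range_le T
    rw [htop, finrank_top, Module.finrank_fin_fun, Module.finrank_fin_fun] at h1
    omega
  obtain ⟨h, h0, hle⟩ := Submodule.exists_le_ker_of_lt_top _ hlt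
  exact ⟨h, h0, LinearMap.range_le_ker_iff.1 hle⟩

/-- `psiExample` and `ghz33` are SLOCC incomparable: neither can be transformed to the
other by local linear maps. -/
theorem psiExample_ghz33_slocc_incomparable :
    (¬ ∃ (A : (Fin 3 → ℂ) →ₗ[ℂ] (Fin 2 → ℂ)) (B : (Fin 3 → ℂ) →ₗ[ℂ] (Fin 2 → ℂ))
        (C : (Fin 3 → ℂ) →ₗ[ℂ] (Fin 4 → ℂ)),
      TensorProduct.map A (TensorProduct.map B C) ghz33 = psiExample)
    ∧ (¬ ∃ (A' : (Fin 2 → ℂ) →ₗ[ℂ] (Fin 3 → ℂ)) (B' : (Fin 2 → ℂ) →ₗ[ℂ] (Fin 3 → ℂ))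
        (C' : (Fin 4 → ℂ) →ₗ[ℂ] (Fin 3 → ℂ)),
      TensorProduct.map A' (TensorProduct.map B' C') psiExample = ghz33) := by
  constructor
  · rintro ⟨A, B, C, hABC⟩
    obtain ⟨h, h0, hC⟩ := exists_dual_comp_eq_zero (by norm_num) C
    have key : ∀ i j : Fin 2,
        tripleContract (LinearMap.proj i) (LinearMap.proj j) h psiExample = 0 := fun i j => by
      rw [← hABC, tripleContract_map, hC, tripleContract_zero_right, LinearMap.zero_apply]
    have h00 := key 0 0
    have h01 := key 0 1
    have h10 := key 1 0
    have h11 := key 1 1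
    -- The coordinate pair `(i, j)` selects one term of `psiExample`; its contraction is `h` of
    -- the third factor, the basis vector of index `2 * i + j`.
    simp [psiExample, tripleContract_tmul] at h00 h01 h10 h11
    refine h0 (LinearMap.pi_ext' fun i => LinearMap.ext_ring ?_)
    fin_cases i <;> simp [*]
  · rintro ⟨A, B, C, hABC⟩
    obtain ⟨h, h0, hA⟩ := exists_dual_comp_eq_zero (by norm_num) A
    have key : ∀ i : Fin 3,
        tripleContract h (LinearMap.proj i) (LinearMap.proj i) ghz33 = 0 := fun i => by
      rw [← hABC, tripleContract_map, hA, tripleContract_zero_left, LinearMap.zero_apply]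
    refine h0 (LinearMap.pi_ext' fun i => LinearMap.ext_ring ?_)
    -- Coordinate `i` in factors two and three leaves only the `i`-th summand of `ghz33`.
    have hi := key i
    simpa [ghz33, tripleContract_tmul, Pi.single_apply] using hi
end

section
/- Fix integers d ≥ 2 and N ≥ 3. For 1 ≤ j ≤ d−1 define the state φ_j = Σ_{i=1}^{d−1} e_i^{⊗N} + Σ_{i=1}^{j} e_i ⊗ e_d ⊗ ⋯ ⊗ e_d (the last vector having one factor e_i followed by N−1 factors e_d) in (ℂ^d)^{⊗N}. Then for j ≠ j' the states φ_j and φ_{j'} are SLOCC-inequivalent: there exist no invertible linear maps X_1, …, X_N : ℂ^d → ℂ^d with (X_1 ⊗ ⋯ ⊗ X_N) φ_j = φ_{j'}. -/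
/-!
The invariant: contract the first tensor factor of `ψ` with a functional `f` and ask whether the
remaining tensor has rank at most one across the cut separating the second factor from the others,
i.e. whether all its `2 × 2` minors vanish. The set of such `f` (`minorSet`) is transported by the
transpose of `X 0` when local invertible maps act, so the dimension of its span is a SLOCC
invariant.

For `φ_j`, contraction with `f` gives
`∑_{i<d-1} f(e_i) e_i^{⊗(N-1)} + (∑_{i<j} f(e_i)) e_{d-1}^{⊗(N-1)}` (indices starting at `0`).
As `N ≥ 3`, rank at most one means that at most one of these coefficients is nonzero. If
`f(e_i) ≠ 0` with `i < j`, it would be the only nonzero `f(e_l)` with `l < d-1`, and the last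
coefficient would equal `f(e_i) ≠ 0`, a contradiction; hence `f` vanishes on `e_0, …, e_{j-1}`.
Conversely every coordinate functional `e_a^*` with `a ≥ j` qualifies. The span therefore
consists of the functionals killing `e_0, …, e_{j-1}`, and has dimension `d - j`.
-/

open scoped TensorProduct

/-- The state `φ_j = ∑_{i=1}^{d-1} e_i^{⊗N} + ∑_{i=1}^{j} e_i ⊗ e_d ⊗ ⋯ ⊗ e_d`
in `(ℂ^d)^{⊗N}` (with zero-based indexing: `e_i` for `i = 1, …, d-1` becomes
`Pi.single ⟨i-1⟩`, realized below by summing `i` over `Finset.range (d-1)` resp.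
`Finset.range j`, and `e_d` becomes `Pi.single ⟨d-1⟩`). -/
noncomputable def phiState (d N j : ℕ) (hd : 0 < d) (hN : 0 < N) :
    ⨂[ℂ] _ : Fin N, (Fin d → ℂ) :=
  (∑ i ∈ Finset.range (d - 1),
    ⨂ₜ[ℂ] _ : Fin N, (Pi.single (⟨i % d, Nat.mod_lt i hd⟩ : Fin d) 1 : Fin d → ℂ))
  + ∑ i ∈ Finset.range j, ⨂ₜ[ℂ] k : Fin N,
      (if k = (⟨0, hN⟩ : Fin N)
        then (Pi.single (⟨i % d, Nat.mod_lt i hd⟩ : Fin d) 1 : Fin d → ℂ)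
        else (Pi.single (⟨d - 1, Nat.sub_lt hd Nat.one_pos⟩ : Fin d) 1 : Fin d → ℂ))

/-- The scalar obtained by contracting each factor of a tensor with the functional `F k`. -/
noncomputable def contract {d N : ℕ} (F : Fin N → Module.Dual ℂ (Fin d → ℂ)) :
    (⨂[ℂ] _ : Fin N, (Fin d → ℂ)) →ₗ[ℂ] ℂ :=
  PiTensorProduct.lift ((MultilinearMap.mkPiAlgebra ℂ (Fin N) ℂ).compLinearMap F)

lemma contract_tprod {d N : ℕ} (F : Fin N → Module.Dual ℂ (Fin d → ℂ))
    (v : Fin N → (Fin d → ℂ)) :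
    contract F (PiTensorProduct.tprod ℂ v) = ∏ k, F k (v k) := by
  simp [contract]

lemma contract_map {d N : ℕ} (F : Fin N → Module.Dual ℂ (Fin d → ℂ))
    (X : Fin N → ((Fin d → ℂ) →ₗ[ℂ] (Fin d → ℂ))) (ψ : ⨂[ℂ] _ : Fin N, (Fin d → ℂ)) :
    contract F (PiTensorProduct.map X ψ) = contract (fun k => F k ∘ₗ X k) ψ := by
  rw [contract, ← LinearMap.comp_apply, PiTensorProduct.lift_comp_map]
  rfl

/-- The functionals `f` such that contracting factor `p` of `ψ` with `f` leaves a tensor all of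
whose `2 × 2` minors, for the cut separating factor `q` from the others, vanish. -/
def minorSet {d N : ℕ} (p q : Fin N) (ψ : ⨂[ℂ] _ : Fin N, (Fin d → ℂ)) :
    Set (Module.Dual ℂ (Fin d → ℂ)) :=
  {f | ∀ F G : Fin N → Module.Dual ℂ (Fin d → ℂ), F p = f → G p = f →
    contract F ψ * contract G ψ =
      contract (Function.update F q (G q)) ψ * contract (Function.update G q (F q)) ψ}

lemma comp_mem_minorSet {d N : ℕ} (p q : Fin N) (ψ : ⨂[ℂ] _ : Fin N, (Fin d → ℂ))
    (X : Fin N → ((Fin d → ℂ) ≃ₗ[ℂ] (Fin d → ℂ))) (f : Module.Dual ℂ (Fin d → ℂ)) :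
    f ∈ minorSet p q (PiTensorProduct.map (fun k => (X k).toLinearMap) ψ) ↔
      (X p).dualMap f ∈ minorSet p q ψ := by
  have upd : ∀ (F : Fin N → Module.Dual ℂ (Fin d → ℂ)) (g : Module.Dual ℂ (Fin d → ℂ)),
      (fun k => (Function.update F q g) k ∘ₗ (X k).toLinearMap) =
        Function.update (fun k => F k ∘ₗ (X k).toLinearMap) q (g ∘ₗ (X q).toLinearMap) := by
    intro F g
    funext k
    by_cases h : k = q
    · subst h; simp
    · simp [h]
  constructor
  · intro h F G hF hG
    have inv : ∀ F : Fin N → Module.Dual ℂ (Fin d → ℂ),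
        (fun k => (F k ∘ₗ (X k).symm.toLinearMap) ∘ₗ (X k).toLinearMap) = F := by
      intro F; funext k; ext x; simp
    have := h (fun k => F k ∘ₗ (X k).symm.toLinearMap) (fun k => G k ∘ₗ (X k).symm.toLinearMap)
      (by ext x; simp [hF]) (by ext x; simp [hG])
    simp only [contract_map, upd, inv] at this
    have inv' : ∀ F : Fin N → Module.Dual ℂ (Fin d → ℂ),
        (F q ∘ₗ (X q).symm.toLinearMap) ∘ₗ (X q).toLinearMap = F q := fun F => congrFun (inv F) q
    simpa only [inv'] using this
  · intro h F G hF hG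
    have := h (fun k => F k ∘ₗ (X k).toLinearMap) (fun k => G k ∘ₗ (X k).toLinearMap)
      (by ext x; simp [hF]) (by ext x; simp [hG])
    simp only [contract_map, upd]
    exact this

lemma contract_phiState {d N j : ℕ} (hd : 0 < d) (hN : 0 < N)
    (F : Fin N → Module.Dual ℂ (Fin d → ℂ)) :
    contract F (phiState d N j hd hN) =
      (∑ i ∈ Finset.range (d - 1), ∏ k, F k (Pi.single ⟨i % d, Nat.mod_lt i hd⟩ 1)) +
      (∑ i ∈ Finset.range j, F ⟨0, hN⟩ (Pi.single ⟨i % d, Nat.mod_lt i hd⟩ 1)) *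
        ∏ k ∈ Finset.univ.erase ⟨0, hN⟩, F k (Pi.single ⟨d - 1, Nat.sub_lt hd Nat.one_pos⟩ 1) := by
  simp only [phiState, map_add, map_sum, contract_tprod]
  congr 1
  rw [Finset.sum_mul]
  refine Finset.sum_congr rfl fun i _ => ?_
  rw [← Finset.mul_prod_erase _ _ (Finset.mem_univ (⟨0, hN⟩ : Fin N))]
  simp only [if_true]
  congr 1
  refine Finset.prod_congr rfl fun k hk => ?_
  rw [if_neg (Finset.ne_of_mem_erase hk)]

/-- Contracting the first factor of `φ_j` with `e_a^*`, `a ≥ j`, leaves the product tensor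
`e_a^{⊗(N-1)}`, or zero if `a` is the last index. -/
lemma proj_mem_minorSet {d N j : ℕ} (hd : 2 ≤ d) (hN : 3 ≤ N) (a : Fin d)
    (ha : j ≤ a) :
    (LinearMap.proj a : Module.Dual ℂ (Fin d → ℂ)) ∈
      minorSet ⟨0, by omega⟩ ⟨1, by omega⟩ (phiState d N j (by omega) (by omega)) := by
  have hd0 : 0 < d := by omega
  have hN0 : 0 < N := by omega
  have key : ∀ F : Fin N → Module.Dual ℂ (Fin d → ℂ), F ⟨0, hN0⟩ = LinearMap.proj a →
      contract F (phiState d N j hd0 hN0) =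
        if (a : ℕ) < d - 1 then ∏ k, F k (Pi.single a 1) else 0 := by
    intro F hF
    have h0 : ∀ i < d, i ≠ a → F ⟨0, hN0⟩ (Pi.single ⟨i % d, Nat.mod_lt i hd0⟩ 1) = 0 := by
      intro i hi hia
      rw [hF, LinearMap.proj_apply, Pi.single_eq_of_ne]
      intro h
      have := congrArg Fin.val h
      simp only [Nat.mod_eq_of_lt hi] at this
      exact hia this.symm
    have hz : ∀ i < d, i ≠ a → ∏ k, F k (Pi.single ⟨i % d, Nat.mod_lt i hd0⟩ 1) = 0 :=
      fun i hi hia => Finset.prod_eq_zero (Finset.mem_univ (⟨0, hN0⟩ : Fin N)) (h0 i hi hia)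
    rw [contract_phiState, Finset.sum_eq_zero (s := Finset.range j), zero_mul, add_zero]
    · split_ifs with h
      · rw [Finset.sum_eq_single (a : ℕ)]
        · have : (⟨(a : ℕ) % d, Nat.mod_lt _ hd0⟩ : Fin d) = a :=
            Fin.ext (Nat.mod_eq_of_lt a.isLt)
          rw [this]
        · intro i hi hia
          rw [Finset.mem_range] at hi
          exact hz i (by omega) hia
        · intro hn
          exact absurd (Finset.mem_range.2 h) hn
      · refine Finset.sum_eq_zero fun i hi => ?_
        rw [Finset.mem_range] at hi
        exact hz i (by omega) (by omega)
    · intro i hi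
      rw [Finset.mem_range] at hi
      exact h0 i (by omega) (by omega)
  have h01 : (⟨0, hN0⟩ : Fin N) ≠ ⟨1, by omega⟩ := by simp
  intro F G hF hG
  rw [key F hF, key G hG, key _ (by rw [Function.update_of_ne h01, hF]),
    key _ (by rw [Function.update_of_ne h01, hG])]
  split_ifs
  · rw [← Finset.prod_mul_distrib, ← Finset.prod_mul_distrib]
    refine Finset.prod_congr rfl fun k _ => ?_
    by_cases hk : k = ⟨1, by omega⟩
    · subst hk; simp [mul_comm]
    · simp [hk]
  · simp

/-- The family contracting factor `0` with `f`, factor `1` with `e_b^*` and all the other factors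
with `e_a^*`. -/
noncomputable def testFamily {d : ℕ} (N : ℕ) (f : Module.Dual ℂ (Fin d → ℂ)) (a b : Fin d) :
    Fin N → Module.Dual ℂ (Fin d → ℂ) :=
  fun k => if (k : ℕ) = 0 then f else if (k : ℕ) = 1 then LinearMap.proj b else LinearMap.proj a

lemma prod_testFamily {d N : ℕ} (hN : 3 ≤ N) (f : Module.Dual ℂ (Fin d → ℂ)) (a b i : Fin d) :
    ∏ k ∈ Finset.univ.erase (⟨0, by omega⟩ : Fin N), testFamily N f a b k (Pi.single i 1) =
      if a = i ∧ b = i then 1 else 0 := by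
  split_ifs with h
  · obtain ⟨rfl, rfl⟩ := h
    refine Finset.prod_eq_one fun k hk => ?_
    have hk0 : (k : ℕ) ≠ 0 := fun h0 => Finset.ne_of_mem_erase hk (Fin.ext h0)
    simp [testFamily, hk0]
  · by_cases hb : b = i
    · have ha : a ≠ i := fun ha => h ⟨ha, hb⟩
      refine Finset.prod_eq_zero (i := (⟨2, by omega⟩ : Fin N)) (by simp) ?_
      simp [testFamily, ha]
    · refine Finset.prod_eq_zero (i := (⟨1, by omega⟩ : Fin N)) (by simp) ?_
      simp [testFamily, hb]

lemma contract_testFamily {d N j : ℕ} (hd : 0 < d) (hN : 3 ≤ N)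
    (f : Module.Dual ℂ (Fin d → ℂ)) (a b : Fin d) :
    contract (testFamily N f a b) (phiState d N j hd (by omega)) =
      if a = b then
        (if (a : ℕ) < d - 1 then f (Pi.single a 1)
          else ∑ i ∈ Finset.range j, f (Pi.single ⟨i % d, Nat.mod_lt i hd⟩ 1))
      else 0 := by
  have hN0 : 0 < N := by omega
  have h0 : testFamily N f a b ⟨0, hN0⟩ = f := by simp [testFamily]
  rw [contract_phiState, prod_testFamily hN]
  have hp : ∀ i : Fin d, ∏ k, testFamily N f a b k (Pi.single i 1) =
      f (Pi.single i 1) * if a = i ∧ b = i then 1 else 0 := by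
    intro i
    rw [← Finset.mul_prod_erase _ _ (Finset.mem_univ (⟨0, hN0⟩ : Fin N)), prod_testFamily hN, h0]
  simp only [hp, h0]
  by_cases hab : a = b
  · subst hab
    simp only [and_self, if_true]
    by_cases ha : (a : ℕ) < d - 1
    · have hmod : (⟨(a : ℕ) % d, Nat.mod_lt _ hd⟩ : Fin d) = a :=
        Fin.ext (Nat.mod_eq_of_lt a.isLt)
      have hne : a ≠ ⟨d - 1, Nat.sub_lt hd Nat.one_pos⟩ := by
        intro h
        have := congrArg Fin.val h
        simp only at this
        omega
      rw [if_pos ha, if_neg hne, mul_zero, add_zero, Finset.sum_eq_single (a : ℕ)]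
      · simp [hmod]
      · intro i hi hia
        rw [Finset.mem_range] at hi
        rw [if_neg, mul_zero]
        intro h
        have := congrArg Fin.val h
        simp only [Nat.mod_eq_of_lt (show i < d by omega)] at this
        exact hia this.symm
      · intro hn
        exact absurd (Finset.mem_range.2 ha) hn
    · have heq : a = ⟨d - 1, Nat.sub_lt hd Nat.one_pos⟩ := Fin.ext (by simp only; omega)
      rw [if_neg ha, if_pos heq, mul_one, Finset.sum_eq_zero, zero_add]
      intro i hi
      rw [Finset.mem_range] at hi
      rw [if_neg, mul_zero]
      intro h
      have := congrArg Fin.val h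
      simp only [Nat.mod_eq_of_lt (show i < d by omega)] at this
      omega
  · have hno : ∀ i : Fin d, ¬ (a = i ∧ b = i) := fun i h => hab (h.1.trans h.2.symm)
    simp [hno, hab]

/-- The minors mixing `e_a` with each other `e_b` give `f(e_a) c_b = 0`, where `c_b = f(e_b)` for
`b < d-1` and `c_{d-1} = ∑_{i<j} f(e_i)`. If `f(e_a) ≠ 0`, that sum reduces to `f(e_a)`, so
`f(e_a)² = 0`. -/
lemma apply_single_eq_zero_of_mem {d N j : ℕ} (hd : 2 ≤ d) (hN : 3 ≤ N) (hj : j ≤ d - 1)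
    (f : Module.Dual ℂ (Fin d → ℂ))
    (hf : f ∈ minorSet ⟨0, by omega⟩ ⟨1, by omega⟩ (phiState d N j (by omega) (by omega)))
    (a : Fin d) (ha : (a : ℕ) < j) : f (Pi.single a 1) = 0 := by
  have hd0 : 0 < d := by omega
  have upd : ∀ a b : Fin d, Function.update (testFamily N f a a) ⟨1, by omega⟩
      (testFamily N f b b ⟨1, by omega⟩) = testFamily N f a b := by
    intro a b
    funext k
    by_cases hk : k = ⟨1, by omega⟩
    · subst hk; simp [testFamily]
    · have : (k : ℕ) ≠ 1 := fun h => hk (Fin.ext h)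
      simp [hk, testFamily, this]
  have key : ∀ b : Fin d, a ≠ b → f (Pi.single a 1) *
      (if (b : ℕ) < d - 1 then f (Pi.single b 1)
        else ∑ i ∈ Finset.range j, f (Pi.single ⟨i % d, Nat.mod_lt i hd0⟩ 1)) = 0 := by
    intro b hab
    have := hf (testFamily N f a a) (testFamily N f b b) (by simp [testFamily])
      (by simp [testFamily])
    rw [upd, upd] at this
    simpa only [contract_testFamily hd0 hN, if_true, if_neg hab, zero_mul,
      if_pos (show (a : ℕ) < d - 1 by omega)] using this
  by_contra hne
  have hlast := key ⟨d - 1, by omega⟩ (by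
    intro h
    have := congrArg Fin.val h
    simp only at this
    omega)
  rw [if_neg (by simp), Finset.sum_eq_single (a : ℕ)] at hlast
  · have hmod : (⟨(a : ℕ) % d, Nat.mod_lt _ hd0⟩ : Fin d) = a :=
      Fin.ext (Nat.mod_eq_of_lt a.isLt)
    rw [hmod] at hlast
    exact hne (mul_self_eq_zero.1 hlast)
  · intro i hi hia
    rw [Finset.mem_range] at hi
    have hval : i % d = i := Nat.mod_eq_of_lt (by omega)
    have := key ⟨i % d, Nat.mod_lt i hd0⟩ (by
      intro h
      have := congrArg Fin.val h
      simp only [hval] at this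
      exact hia this.symm)
    rw [if_pos (by simp only [hval]; omega)] at this
    exact (mul_eq_zero.1 this).resolve_left hne
  · intro hn
    exact absurd (Finset.mem_range.2 ha) hn

lemma finrank_span_minorSet {d N j : ℕ} (hd : 2 ≤ d) (hN : 3 ≤ N) (hj : j ≤ d - 1) :
    Module.finrank ℂ (Submodule.span ℂ
      (minorSet ⟨0, by omega⟩ ⟨1, by omega⟩ (phiState d N j (by omega) (by omega)))) = d - j := by
  let P : {a : Fin d // j ≤ (a : ℕ)} → Module.Dual ℂ (Fin d → ℂ) :=
    fun a => LinearMap.proj (a : Fin d)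
  have hspan : Submodule.span ℂ
      (minorSet ⟨0, by omega⟩ ⟨1, by omega⟩ (phiState d N j (by omega) (by omega))) =
      Submodule.span ℂ (Set.range P) := by
    apply le_antisymm
    · rw [Submodule.span_le]
      intro f hf
      have hsum : f = ∑ a : Fin d, f (Pi.single a 1) • LinearMap.proj a := by
        ext b
        simp [Pi.single_apply]
      rw [hsum]
      refine Submodule.sum_mem _ fun a _ => ?_
      by_cases ha : (a : ℕ) < j
      · rw [apply_single_eq_zero_of_mem hd hN hj f hf a ha, zero_smul]
        exact Submodule.zero_mem _
      · exact Submodule.smul_mem _ _ (Submodule.subset_span ⟨⟨a, by omega⟩, rfl⟩)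
    · rw [Submodule.span_le]
      rintro _ ⟨a, rfl⟩
      exact Submodule.subset_span (proj_mem_minorSet hd hN a a.2)
  have hli : LinearIndependent ℂ P := by
    have hP : P = (Pi.basisFun ℂ (Fin d)).dualBasis ∘
        (fun a : {a : Fin d // j ≤ (a : ℕ)} => (a : Fin d)) := by
      funext a
      ext b
      simp [P, Pi.single_apply]
    rw [hP]
    exact (Pi.basisFun ℂ (Fin d)).dualBasis.linearIndependent.comp _ Subtype.val_injective
  rw [hspan, finrank_span_eq_card hli, Fintype.card_subtype]
  have : (Finset.univ.filter fun a : Fin d => j ≤ (a : ℕ)) = Finset.Ici ⟨j, by omega⟩ := by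
    ext a
    simp [Fin.le_def]
  rw [this, Fin.card_Ici]

/-- For `d ≥ 2`, `N ≥ 3` and `1 ≤ j ≠ j' ≤ d-1`, the states `φ_j` and `φ_{j'}` are
SLOCC-inequivalent: no invertible local operators relate them. -/
theorem phiState_slocc_inequivalent (d N : ℕ) (hd : 2 ≤ d) (hN : 3 ≤ N)
    (j j' : ℕ) (hj1 : 1 ≤ j) (hj2 : j ≤ d - 1) (hj'1 : 1 ≤ j') (hj'2 : j' ≤ d - 1)
    (hjj : j ≠ j') :
    ¬ ∃ X : Fin N → ((Fin d → ℂ) ≃ₗ[ℂ] (Fin d → ℂ)),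
      PiTensorProduct.map (fun k => (X k).toLinearMap)
        (phiState d N j (by omega) (by omega)) = phiState d N j' (by omega) (by omega) := by
  rintro ⟨X, hX⟩
  have h := finrank_span_minorSet hd hN hj2
  have h' := finrank_span_minorSet hd hN hj'2
  let p : Fin N := ⟨0, by omega⟩
  let q : Fin N := ⟨1, by omega⟩
  have himg : (X p).dualMap '' minorSet p q (phiState d N j' (by omega) (by omega)) =
      minorSet p q (phiState d N j (by omega) (by omega)) := by
    rw [← hX]
    ext g
    constructor
    · rintro ⟨f, hf, rfl⟩
      exact (comp_mem_minorSet p q _ X f).1 hf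
    · intro hg
      refine ⟨(X p).dualMap.symm g, (comp_mem_minorSet p q _ X _).2 ?_, ?_⟩
      · rwa [LinearEquiv.apply_symm_apply]
      · rw [LinearEquiv.apply_symm_apply]
  have hmap := LinearEquiv.finrank_map_eq (X p).dualMap
    (Submodule.span ℂ (minorSet p q (phiState d N j' (by omega) (by omega))))
  have himg' := congrArg (Submodule.span ℂ) himg
  have hdim := ((congrArg (fun W : Submodule ℂ (Module.Dual ℂ (Fin d → ℂ)) =>
    Module.finrank ℂ W) ((Submodule.map_span _ _).trans himg')).symm.trans hmap)
  have : d - j = d - j' := h.symm.trans (hdim.trans h')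
  omega
end

section
/- Let d ≥ 1 and index the standard basis of ℂ^d by ZMod d. For each i ∈ ZMod d let P_i : ℂ^d ⊗ ℂ^d → ℂ^d ⊗ ℂ^d be the orthogonal projection onto the span of {e_j ⊗ e_{j+i} : j ∈ ZMod d}, and let S_i : ℂ^d → ℂ^d be the unitary shift e_l ↦ e_{l−i}. Then: (i) Σ_{i ∈ ZMod d} P_i = id on ℂ^d ⊗ ℂ^d, so {P_i} is a complete projective measurement; and (ii) for every i ∈ ZMod d, (id_{ℂ^d} ⊗ ((id_{ℂ^d} ⊗ S_i) ∘ P_i) ⊗ S_i) applied to (Σ_{j ∈ ZMod d} e_j ⊗ e_j) ⊗ (Σ_{k ∈ ZMod d} e_k ⊗ e_k) ∈ ℂ^d ⊗ (ℂ^d ⊗ ℂ^d) ⊗ ℂ^d equals Σ_{j ∈ ZMod d} e_j ⊗ (e_j ⊗ e_j) ⊗ e_j, i.e., every measurement outcome followed by local shift corrections converts two bipartite rank-d GHZ (maximally entangled) states into the rank-d GHZ state on the three parties obtained by merging the two middle systems. -/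
/-!
On the standard basis, `P_i (e_j ⊗ e_k)` is `e_j ⊗ e_k` when `k = j + i` and `0` otherwise
(`ghzProj_tmul_single`), and `S_i e_l = e_{l-i}` (`ghzShift_single`). Completeness holds because for
each pair `(j, k)` exactly one outcome, `i = k - j`, keeps `e_j ⊗ e_k`. For the conversion, outcome
`i` keeps, for each `j`, only the term `k = j + i` of the product of the two GHZ states; the two
shifts then send both copies of `e_{j+i}` to `e_j`.
-/

open scoped TensorProduct

/-- The orthogonal projection `P_i` of `ℂ^d ⊗ ℂ^d` onto the span of
`{e_j ⊗ e_{j+i} : j ∈ ZMod d}`: it fixes the orthonormal basis vectors `e_j ⊗ e_{j+i}`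
and kills all other standard basis vectors `e_j ⊗ e_k` (`k ≠ j + i`). -/
noncomputable def ghzProj (d : ℕ) [NeZero d] (i : ZMod d) :
    ((ZMod d → ℂ) ⊗[ℂ] (ZMod d → ℂ)) →ₗ[ℂ] ((ZMod d → ℂ) ⊗[ℂ] (ZMod d → ℂ)) :=
  (((Pi.basisFun ℂ (ZMod d)).tensorProduct (Pi.basisFun ℂ (ZMod d))).constr ℂ)
    (fun jk => if jk.2 = jk.1 + i then
      (Pi.single jk.1 1 : ZMod d → ℂ) ⊗ₜ[ℂ] (Pi.single jk.2 1 : ZMod d → ℂ) else 0)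

/-- The unitary shift `S_i : e_l ↦ e_{l-i}` on `ℂ^d`. -/
noncomputable def ghzShift (d : ℕ) [NeZero d] (i : ZMod d) :
    (ZMod d → ℂ) →ₗ[ℂ] (ZMod d → ℂ) :=
  ((Pi.basisFun ℂ (ZMod d)).constr ℂ) (fun l => (Pi.single (l - i) 1 : ZMod d → ℂ))

theorem ghzProj_tmul_single (d : ℕ) [NeZero d] (i j k : ZMod d) :
    ghzProj d i ((Pi.single j 1 : ZMod d → ℂ) ⊗ₜ[ℂ] (Pi.single k 1 : ZMod d → ℂ)) =
      if k = j + i then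
        (Pi.single j 1 : ZMod d → ℂ) ⊗ₜ[ℂ] (Pi.single k 1 : ZMod d → ℂ) else 0 := by
  have h := ((Pi.basisFun ℂ (ZMod d)).tensorProduct (Pi.basisFun ℂ (ZMod d))).constr_basis ℂ
    (fun jk => if jk.2 = jk.1 + i then
      (Pi.single jk.1 1 : ZMod d → ℂ) ⊗ₜ[ℂ] (Pi.single jk.2 1 : ZMod d → ℂ) else 0) (j, k)
  simpa only [ghzProj, Module.Basis.tensorProduct_apply, Pi.basisFun_apply] using h

theorem ghzShift_single (d : ℕ) [NeZero d] (i l : ZMod d) :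
    ghzShift d i (Pi.single l 1) = Pi.single (l - i) 1 := by
  have h := (Pi.basisFun ℂ (ZMod d)).constr_basis ℂ
    (fun l => (Pi.single (l - i) 1 : ZMod d → ℂ)) l
  simpa only [ghzShift, Pi.basisFun_apply] using h

/-- The projections `{P_i}` form a complete projective measurement, and each outcome `i`,
followed by the local shift corrections, converts two bipartite rank-`d` GHZ states into
the rank-`d` GHZ state on the three parties obtained by merging the two middle systems. -/
theorem ghz_merge_measurement (d : ℕ) [NeZero d] (hd : 1 ≤ d) :
    (∑ i : ZMod d, ghzProj d i = LinearMap.id)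
    ∧ (∀ i : ZMod d,
      TensorProduct.map (LinearMap.id : (ZMod d → ℂ) →ₗ[ℂ] (ZMod d → ℂ))
        (TensorProduct.map
          ((TensorProduct.map (LinearMap.id : (ZMod d → ℂ) →ₗ[ℂ] (ZMod d → ℂ)) (ghzShift d i))
            ∘ₗ ghzProj d i)
          (ghzShift d i))
        (∑ j : ZMod d, ∑ k : ZMod d,
          (Pi.single j 1 : ZMod d → ℂ) ⊗ₜ[ℂ]
            (((Pi.single j 1 : ZMod d → ℂ) ⊗ₜ[ℂ] (Pi.single k 1 : ZMod d → ℂ)) ⊗ₜ[ℂ]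
              (Pi.single k 1 : ZMod d → ℂ)))
      = ∑ j : ZMod d,
          (Pi.single j 1 : ZMod d → ℂ) ⊗ₜ[ℂ]
            (((Pi.single j 1 : ZMod d → ℂ) ⊗ₜ[ℂ] (Pi.single j 1 : ZMod d → ℂ)) ⊗ₜ[ℂ]
              (Pi.single j 1 : ZMod d → ℂ))) := by
  constructor
  · refine ((Pi.basisFun ℂ (ZMod d)).tensorProduct (Pi.basisFun ℂ (ZMod d))).ext ?_
    rintro ⟨j, k⟩
    simp only [Module.Basis.tensorProduct_apply, Pi.basisFun_apply, LinearMap.sum_apply,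
      ghzProj_tmul_single, LinearMap.id_apply]
    rw [Finset.sum_eq_single (k - j)]
    · simp
    · intro i _ hi
      exact if_neg fun h => hi (by simp [h])
    · simp
  · intro i
    simp only [map_sum, TensorProduct.map_tmul, LinearMap.comp_apply, LinearMap.id_apply,
      ghzProj_tmul_single, ghzShift_single]
    refine Finset.sum_congr rfl fun j _ => ?_
    rw [Finset.sum_eq_single (j + i)]
    · simp [ghzShift_single]
    · intro k _ hk
      simp [hk]
    · simp
end

section
/- Let d ≥ 1, N ≥ 2, and let p : ZMod d → ℝ be nonnegative with Σ_{j ∈ ZMod d} p_j = 1. For each k ∈ ZMod d define the linear map M_k : ℂ^d → ℂ^d by M_k = Σ_{j ∈ ZMod d} √(p_j) |e_j⟩⟨e_{j+k}| (i.e., M_k e_{j+k} = √(p_j) e_j on the standard basis), and let S_k : ℂ^d → ℂ^d be the unitary shift e_l ↦ e_{l−k}. Then: (i) Σ_{k ∈ ZMod d} M_k† M_k = id_{ℂ^d}, so {M_k} is a complete POVM; and (ii) for every k ∈ ZMod d, (M_k ⊗ S_k ⊗ ⋯ ⊗ S_k)(Σ_{l ∈ ZMod d} e_l^{⊗N}) =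 Σ_{j ∈ ZMod d} √(p_j) e_j^{⊗N}, i.e., every outcome followed by local shift corrections converts the N-partite rank-d GHZ state into the state Σ_j √(p_j) e_j^{⊗N} exactly. -/
/-!
On the standard basis `M_k e_l = √(p_{l-k}) e_{l-k}`, so `M_k† e_j = √(p_j) e_{j+k}` and
`M_k† M_k e_l = p_{l-k} e_l`. Summing over `k`, the index `l - k` runs over all of `ZMod d`, so the
total is `(∑_j p_j) e_l = e_l`, which is completeness.

For the conversion, `M_k ⊗ S_k ⊗ ⋯ ⊗ S_k` sends `e_l^{⊗N}` to `√(p_{l-k}) e_{l-k}^{⊗N}`: the scalar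
appears in the measured factor alone, so multilinearity pulls it out once. Summing over `l` and
substituting `j = l - k` gives the target state.
-/

open scoped TensorProduct

/-- The measurement operator `M_k = ∑_j √(p_j) |e_j⟩⟨e_{j+k}|` on `ℂ^d`, i.e.
`M_k e_l = √(p_{l-k}) e_{l-k}`. -/
noncomputable def povmM (d : ℕ) [NeZero d] (p : ZMod d → ℝ) (k : ZMod d) :
    EuclideanSpace ℂ (ZMod d) →ₗ[ℂ] EuclideanSpace ℂ (ZMod d) :=
  ((EuclideanSpace.basisFun (ZMod d) ℂ).toBasis.constr ℂ)
    (fun l => (Real.sqrt (p (l - k)) : ℂ) • EuclideanSpace.single (l - k) (1 : ℂ))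

/-- The unitary shift `S_k : e_l ↦ e_{l-k}` on `ℂ^d`. -/
noncomputable def shiftS (d : ℕ) [NeZero d] (k : ZMod d) :
    EuclideanSpace ℂ (ZMod d) →ₗ[ℂ] EuclideanSpace ℂ (ZMod d) :=
  ((EuclideanSpace.basisFun (ZMod d) ℂ).toBasis.constr ℂ)
    (fun l => EuclideanSpace.single (l - k) (1 : ℂ))

theorem povmM_single (d : ℕ) [NeZero d] (p : ZMod d → ℝ) (k l : ZMod d) :
    povmM d p k (EuclideanSpace.single l (1 : ℂ))
      = (Real.sqrt (p (l - k)) : ℂ) • EuclideanSpace.single (l - k) (1 : ℂ) := by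
  have h := (EuclideanSpace.basisFun (ZMod d) ℂ).toBasis.constr_basis ℂ
    (fun l => (Real.sqrt (p (l - k)) : ℂ) • EuclideanSpace.single (l - k) (1 : ℂ)) l
  rwa [OrthonormalBasis.coe_toBasis, EuclideanSpace.basisFun_apply] at h

theorem shiftS_single (d : ℕ) [NeZero d] (k l : ZMod d) :
    shiftS d k (EuclideanSpace.single l (1 : ℂ)) = EuclideanSpace.single (l - k) (1 : ℂ) := by
  have h := (EuclideanSpace.basisFun (ZMod d) ℂ).toBasis.constr_basis ℂ
    (fun l => EuclideanSpace.single (l - k) (1 : ℂ)) l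
  rwa [OrthonormalBasis.coe_toBasis, EuclideanSpace.basisFun_apply] at h

/-- `M_k† e_j = √(p_j) e_{j+k}`, read off from the matrix entries `⟪M_k e_i, e_j⟫`. -/
theorem adjoint_povmM_single (d : ℕ) [NeZero d] (p : ZMod d → ℝ) (k j : ZMod d) :
    LinearMap.adjoint (povmM d p k) (EuclideanSpace.single j (1 : ℂ))
      = (Real.sqrt (p j) : ℂ) • EuclideanSpace.single (j + k) (1 : ℂ) := by
  refine InnerProductSpace.ext_inner_left_basis
    (EuclideanSpace.basisFun (ZMod d) ℂ).toBasis fun i => ?_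
  rw [OrthonormalBasis.coe_toBasis, EuclideanSpace.basisFun_apply, LinearMap.adjoint_inner_right,
    povmM_single, inner_smul_left, inner_smul_right]
  by_cases h : i = j + k
  · subst h
    simp
  · have h' : i - k ≠ j := fun e => h (by rw [← e, sub_add_cancel])
    simp [EuclideanSpace.inner_single_left, h, h']

/-- `{M_k}` is a complete POVM, and each outcome `k` followed by shift corrections on the
other `N-1` parties converts the `N`-partite rank-`d` GHZ state exactly into
`∑_j √(p_j) e_j^{⊗N}`. -/
theorem ghz_to_weighted_ghz_povm (d N : ℕ) [NeZero d] (hd : 1 ≤ d) (hN : 2 ≤ N)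
    (p : ZMod d → ℝ) (hp : ∀ j, 0 ≤ p j) (hsum : ∑ j : ZMod d, p j = 1) :
    (∑ k : ZMod d, (LinearMap.adjoint (povmM d p k)) ∘ₗ povmM d p k = LinearMap.id)
    ∧ (∀ k : ZMod d,
      PiTensorProduct.map
        (fun j : Fin N => if j = (⟨0, by omega⟩ : Fin N) then povmM d p k else shiftS d k)
        (∑ l : ZMod d, ⨂ₜ[ℂ] _ : Fin N, EuclideanSpace.single l (1 : ℂ))
      = ∑ j : ZMod d, (Real.sqrt (p j) : ℂ) •
          ⨂ₜ[ℂ] _ : Fin N, EuclideanSpace.single j (1 : ℂ)) := by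
  constructor
  · refine (EuclideanSpace.basisFun (ZMod d) ℂ).toBasis.ext fun l => ?_
    rw [OrthonormalBasis.coe_toBasis, EuclideanSpace.basisFun_apply]
    have hk (k : ZMod d) :
        (LinearMap.adjoint (povmM d p k) ∘ₗ povmM d p k) (EuclideanSpace.single l (1 : ℂ))
          = ((p (l - k) : ℝ) : ℂ) • EuclideanSpace.single l (1 : ℂ) := by
      rw [LinearMap.comp_apply, povmM_single, map_smul, adjoint_povmM_single, smul_smul,
        sub_add_cancel, ← Complex.ofReal_mul, Real.mul_self_sqrt (hp _)]
    have hs : ∑ k : ZMod d, p (l - k) = 1 := by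
      rw [← hsum]
      exact (Equiv.subLeft l).sum_comp p
    rw [LinearMap.sum_apply, Finset.sum_congr rfl fun k _ => hk k, ← Finset.sum_smul,
      ← Complex.ofReal_sum, hs, Complex.ofReal_one, one_smul, LinearMap.id_apply]
  · intro k
    rw [map_sum, ← (Equiv.subRight k).sum_comp fun j => (Real.sqrt (p j) : ℂ) •
      ⨂ₜ[ℂ] _ : Fin N, EuclideanSpace.single j (1 : ℂ)]
    refine Finset.sum_congr rfl fun l _ => ?_
    rw [PiTensorProduct.map_tprod]
    -- The image family is constant except for a scalar in the measured factor.
    have hf : (fun i : Fin N => (if i = (⟨0, by omega⟩ : Fin N) then povmM d p k else shiftS d k)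
          (EuclideanSpace.single l (1 : ℂ)))
        = fun i : Fin N => (if i = (⟨0, by omega⟩ : Fin N) then
            (Real.sqrt (p (l - k)) : ℂ) else 1) • EuclideanSpace.single (l - k) (1 : ℂ) := by
      funext i
      split_ifs
      · exact povmM_single d p k l
      · rw [shiftS_single, one_smul]
    rw [hf, MultilinearMap.map_smul_univ, Finset.prod_ite_eq' Finset.univ,
      if_pos (Finset.mem_univ _)]
    rfl
end
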